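/- Let γ ∈ [0, π/4] and let A₀,A₁,B₀,B₁ be arbitrary POVM elements on ℂ². If the observed Clauser–Horne value S := S^(1)(ρ_γ; A₀,A₁,B₀,B₁) is nonnegative, then the concurrence C_γ = sin(2γ) of |ψ^γ⟩ is bounded from below as sin(2γ) ≥ √((2S + 1)² − 1). -/

import Mathlib

open Matrix
open scoped Kronecker ComplexOrder

/-- `A` is a POVM element on `ℂ^d`: both `A` and `1 - A` are positive semidefinite. -/
def IsPOVMElem {d : ℕ} (A : Matrix (Fin d) (Fin d) ℂ) : Prop :=
  A.PosSemidef ∧ (1 - A).PosSemidef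

/-- `ρ` is a density matrix: positive semidefinite with unit trace. -/
def IsDensityMatrix {n : Type*} [Fintype n] [DecidableEq n]
    (ρ : Matrix n n ℂ) : Prop :=
  ρ.PosSemidef ∧ ρ.trace = 1

/-- The tilted-CH Bell value `S^(τ)(ρ; A₀,A₁,B₀,B₁)`. -/
noncomputable def tiltedCHBell {d : ℕ} (τ : ℝ)
    (ρ : Matrix (Fin d × Fin d) (Fin d × Fin d) ℂ)
    (A0 A1 B0 B1 : Matrix (Fin d) (Fin d) ℂ) : ℝ :=
  (Matrix.trace (ρ * (A0 ⊗ₖ B0 + A0 ⊗ₖ B1 + A1 ⊗ₖ B0 - A1 ⊗ₖ B1))).re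
    - τ * (Matrix.trace (ρ * (A0 ⊗ₖ (1 : Matrix (Fin d) (Fin d) ℂ)))).re
    - τ * (Matrix.trace (ρ * ((1 : Matrix (Fin d) (Fin d) ℂ) ⊗ₖ B0))).re

/-- The `d`-dimensional maximally entangled state `|Ψ⁺_d⟩` as a vector. -/
noncomputable def maxEntVec (d : ℕ) : Fin d × Fin d → ℂ :=
  fun jk => if jk.1 = jk.2 then (1 / Real.sqrt d : ℂ) else 0

/-- The density matrix `ρ_d⁺ = |Ψ⁺_d⟩⟨Ψ⁺_d|`. -/
noncomputable def maxEntState (d : ℕ) :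
    Matrix (Fin d × Fin d) (Fin d × Fin d) ℂ :=
  Matrix.vecMulVec (maxEntVec d) (fun jk => starRingEnd ℂ (maxEntVec d jk))

/-- The two-qubit pure state `|ψ^γ⟩ = cos γ |00⟩ + sin γ |11⟩` as a vector. -/
noncomputable def schmidtVec (γ : ℝ) : Fin 2 × Fin 2 → ℂ :=
  fun jk =>
    if jk = (0, 0) then (Real.cos γ : ℂ)
    else if jk = (1, 1) then (Real.sin γ : ℂ) else 0

/-- The density matrix `ρ_γ = |ψ^γ⟩⟨ψ^γ|`. -/
noncomputable def schmidtState (γ : ℝ) :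
    Matrix (Fin 2 × Fin 2) (Fin 2 × Fin 2) ℂ :=
  Matrix.vecMulVec (schmidtVec γ) (fun jk => starRingEnd ℂ (schmidtVec γ jk))

/-! Passing from POVM elements `A` to observables `2A - 1` turns the Clauser–Horne value `S` into a
CHSH value `4S + 2`, so the claim is the bound `2√(1 + sin² 2γ)` on the CHSH value of `ψ^γ`. By
multilinearity it suffices to consider `±1`-valued observables. If one of them is `1` or `-1`,
positivity alone gives the classical bound `2`. Otherwise all four are reflections `v · σ` along
unit Bloch vectors, on which the correlations of `ψ^γ` are `⟪v, T w⟫` with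
`T = diag(sin 2γ, -sin 2γ, 1)`. Since `b₀ + b₁` and `b₀ - b₁` are orthogonal, the CHSH value is then
at most twice the root of the sum of the two largest squared singular values of `T` (the Horodecki
criterion). -/

section CHSH

variable {V W : Type*} [AddCommGroup V] [Module ℝ V] [AddCommGroup W] [Module ℝ W]

/-- The Clauser–Horne–Shimony–Holt combination of a bilinear correlation form `E`. -/
def chsh (E : V →ₗ[ℝ] W →ₗ[ℝ] ℝ) (x₀ x₁ : V) (y₀ y₁ : W) : ℝ :=
  E x₀ y₀ + E x₀ y₁ + E x₁ y₀ - E x₁ y₁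

lemma chsh_flip (E : V →ₗ[ℝ] W →ₗ[ℝ] ℝ) (x₀ x₁ : V) (y₀ y₁ : W) :
    chsh E.flip y₀ y₁ x₀ x₁ = chsh E x₀ x₁ y₀ y₁ := by
  simp only [chsh, LinearMap.flip_apply]
  ring

lemma chsh_swap_left (E : V →ₗ[ℝ] W →ₗ[ℝ] ℝ) (x₀ x₁ : V) (y₀ y₁ : W) :
    chsh E x₁ x₀ y₀ (-y₁) = chsh E x₀ x₁ y₀ y₁ := by
  simp only [chsh, map_neg]
  ring

lemma chsh_neg_left (E : V →ₗ[ℝ] W →ₗ[ℝ] ℝ) (x₀ x₁ : V) (y₀ y₁ : W) :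
    chsh E (-x₀) (-x₁) y₀ y₁ = -chsh E x₀ x₁ y₀ y₁ := by
  simp only [chsh, map_neg, LinearMap.neg_apply]
  ring

lemma chsh_neg_right (E : V →ₗ[ℝ] W →ₗ[ℝ] ℝ) (x₀ x₁ : V) (y₀ y₁ : W) :
    chsh E x₀ x₁ (-y₀) (-y₁) = -chsh E x₀ x₁ y₀ y₁ := by
  rw [← chsh_flip, chsh_neg_left, chsh_flip]

lemma chsh_two_smul_sub (E : V →ₗ[ℝ] W →ₗ[ℝ] ℝ) (x₀ x₁ u : V) (y₀ y₁ v : W) :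
    chsh E ((2 : ℝ) • x₀ - u) ((2 : ℝ) • x₁ - u) ((2 : ℝ) • y₀ - v) ((2 : ℝ) • y₁ - v) =
      4 * (chsh E x₀ x₁ y₀ y₁ - E x₀ v - E u y₀) + 2 * E u v := by
  simp only [chsh, map_sub, map_smul, LinearMap.sub_apply, LinearMap.smul_apply, smul_eq_mul]
  ring

lemma chsh_le_of_mem_convexHull_left {E : V →ₗ[ℝ] W →ₗ[ℝ] ℝ} {s : Set V} {y₀ y₁ : W} {M : ℝ}
    (h : ∀ x₀ ∈ s, ∀ x₁ ∈ s, chsh E x₀ x₁ y₀ y₁ ≤ M) {x₀ x₁ : V}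
    (hx₀ : x₀ ∈ convexHull ℝ s) (hx₁ : x₁ ∈ convexHull ℝ s) : chsh E x₀ x₁ y₀ y₁ ≤ M := by
  have hlin : IsLinearMap ℝ fun x : V × V => chsh E x.1 x.2 y₀ y₁ :=
    ⟨fun x z => by simp only [chsh, Prod.fst_add, Prod.snd_add, map_add, LinearMap.add_apply]; ring,
      fun r x => by
        simp only [chsh, Prod.smul_fst, Prod.smul_snd, map_smul, LinearMap.smul_apply, smul_eq_mul]
        ring⟩
  have hx : (x₀, x₁) ∈ convexHull ℝ (s ×ˢ s) := by
    rw [convexHull_prod]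
    exact ⟨hx₀, hx₁⟩
  exact convexHull_min (fun x hx => h x.1 hx.1 x.2 hx.2) (convex_halfSpace_le hlin M) hx

lemma chsh_le_of_mem_convexHull {E : V →ₗ[ℝ] W →ₗ[ℝ] ℝ} {s : Set V} {t : Set W} {M : ℝ}
    (h : ∀ x₀ ∈ s, ∀ x₁ ∈ s, ∀ y₀ ∈ t, ∀ y₁ ∈ t, chsh E x₀ x₁ y₀ y₁ ≤ M) {x₀ x₁ : V} {y₀ y₁ : W}
    (hx₀ : x₀ ∈ convexHull ℝ s) (hx₁ : x₁ ∈ convexHull ℝ s)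
    (hy₀ : y₀ ∈ convexHull ℝ t) (hy₁ : y₁ ∈ convexHull ℝ t) : chsh E x₀ x₁ y₀ y₁ ≤ M := by
  refine chsh_le_of_mem_convexHull_left (fun x₀ hx₀ x₁ hx₁ => ?_) hx₀ hx₁
  rw [← chsh_flip]
  refine chsh_le_of_mem_convexHull_left (fun y₀ hy₀ y₁ hy₁ => ?_) hy₀ hy₁
  rw [chsh_flip]
  exact h x₀ hx₀ x₁ hx₁ y₀ hy₀ y₁ hy₁

end CHSH

section ClassicalBound

variable {V W : Type*} [AddCommGroup V] [PartialOrder V] [IsOrderedAddMonoid V]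
  [AddCommGroup W] [PartialOrder W] [IsOrderedAddMonoid W]

lemma neg_mem_Icc_neg {u x : V} (hx : x ∈ Set.Icc (-u) u) : -x ∈ Set.Icc (-u) u :=
  ⟨neg_le_neg hx.2, neg_le.1 hx.1⟩

variable [Module ℝ V] [Module ℝ W] {E : V →ₗ[ℝ] W →ₗ[ℝ] ℝ} {u x₀ x₁ : V} {v y₀ y₁ : W}

lemma chsh_unit_left_le (hE : ∀ x y, 0 ≤ x → 0 ≤ y → 0 ≤ E x y) (hx₁ : x₁ ∈ Set.Icc (-u) u)
    (hy₀ : y₀ ≤ v) (hy₁ : y₁ ≤ v) : chsh E u x₁ y₀ y₁ ≤ 2 * E u v := by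
  have hplus : 0 ≤ E (u + x₁) (v - y₀) :=
    hE _ _ (neg_le_iff_add_nonneg'.1 hx₁.1) (sub_nonneg.2 hy₀)
  have hminus : 0 ≤ E (u - x₁) (v - y₁) := hE _ _ (sub_nonneg.2 hx₁.2) (sub_nonneg.2 hy₁)
  simp only [map_add, map_sub, LinearMap.add_apply, LinearMap.sub_apply] at hplus hminus
  simp only [chsh]
  linarith

lemma chsh_le_of_left_eq_unit_or_neg (hE : ∀ x y, 0 ≤ x → 0 ≤ y → 0 ≤ E x y)
    (hx₀ : x₀ = u ∨ x₀ = -u) (hx₁ : x₁ ∈ Set.Icc (-u) u)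
    (hy₀ : y₀ ∈ Set.Icc (-v) v) (hy₁ : y₁ ∈ Set.Icc (-v) v) :
    chsh E x₀ x₁ y₀ y₁ ≤ 2 * E u v := by
  rcases hx₀ with rfl | rfl
  · exact chsh_unit_left_le hE hx₁ hy₀.2 hy₁.2
  · rw [← neg_neg (chsh E _ _ _ _), ← chsh_neg_left, ← chsh_neg_right, neg_neg]
    exact chsh_unit_left_le hE (neg_mem_Icc_neg hx₁) (neg_mem_Icc_neg hy₀).2 (neg_mem_Icc_neg hy₁).2

lemma chsh_le_of_left_deterministic (hE : ∀ x y, 0 ≤ x → 0 ≤ y → 0 ≤ E x y)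
    (hx₀ : x₀ ∈ Set.Icc (-u) u) (hx₁ : x₁ ∈ Set.Icc (-u) u)
    (hy₀ : y₀ ∈ Set.Icc (-v) v) (hy₁ : y₁ ∈ Set.Icc (-v) v)
    (h : (x₀ = u ∨ x₀ = -u) ∨ (x₁ = u ∨ x₁ = -u)) : chsh E x₀ x₁ y₀ y₁ ≤ 2 * E u v := by
  rcases h with h | h
  · exact chsh_le_of_left_eq_unit_or_neg hE h hx₁ hy₀ hy₁
  · rw [← chsh_swap_left]
    exact chsh_le_of_left_eq_unit_or_neg hE h hx₀ hy₀ (neg_mem_Icc_neg hy₁)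

lemma chsh_le_of_right_deterministic (hE : ∀ x y, 0 ≤ x → 0 ≤ y → 0 ≤ E x y)
    (hx₀ : x₀ ∈ Set.Icc (-u) u) (hx₁ : x₁ ∈ Set.Icc (-u) u)
    (hy₀ : y₀ ∈ Set.Icc (-v) v) (hy₁ : y₁ ∈ Set.Icc (-v) v)
    (h : (y₀ = v ∨ y₀ = -v) ∨ (y₁ = v ∨ y₁ = -v)) : chsh E x₀ x₁ y₀ y₁ ≤ 2 * E u v := by
  rw [← chsh_flip, ← E.flip_apply]
  exact chsh_le_of_left_deterministic (fun y x hy hx => hE x y hx hy) hy₀ hy₁ hx₀ hx₁ h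

end ClassicalBound

section Horodecki

variable {F G : Type*} [NormedAddCommGroup F] [InnerProductSpace ℝ F]
  [NormedAddCommGroup G] [InnerProductSpace ℝ G]

open scoped RealInnerProductSpace

lemma inner_sq_add_inner_sq_le_norm_sq {e f : F} (he : ‖e‖ ≤ 1) (hf : ‖f‖ ≤ 1)
    (hef : ⟪e, f⟫ = 0) (k : F) : ⟪e, k⟫ ^ 2 + ⟪f, k⟫ ^ 2 ≤ ‖k‖ ^ 2 := by
  have hnonneg := sq_nonneg ‖k - (⟪e, k⟫ • e + ⟪f, k⟫ • f)‖
  have hcross : ⟪⟪e, k⟫ • e, ⟪f, k⟫ • f⟫ = 0 := by simp [inner_smul_left, inner_smul_right, hef]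
  rw [norm_sub_sq_real, norm_add_sq_real, hcross, inner_add_right, inner_smul_right,
    inner_smul_right, real_inner_comm e k, real_inner_comm f k, norm_smul, norm_smul, mul_pow,
    mul_pow, Real.norm_eq_abs, Real.norm_eq_abs, sq_abs, sq_abs] at hnonneg
  have he' : ⟪e, k⟫ ^ 2 * ‖e‖ ^ 2 ≤ ⟪e, k⟫ ^ 2 :=
    mul_le_of_le_one_right (sq_nonneg _) (pow_le_one₀ (norm_nonneg e) he)
  have hf' : ⟪f, k⟫ ^ 2 * ‖f‖ ^ 2 ≤ ⟪f, k⟫ ^ 2 :=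
    mul_le_of_le_one_right (sq_nonneg _) (pow_le_one₀ (norm_nonneg f) hf)
  linarith

lemma norm_normalize_le_one (x : F) : ‖NormedSpace.normalize x‖ ≤ 1 := by
  by_cases hx : x = 0
  · simp [hx]
  · exact (NormedSpace.norm_normalize hx).le

lemma norm_map_add_norm_map_le {T : F →ₗ[ℝ] G} {K : ℝ}
    (hT : ∀ e f, ‖e‖ ≤ 1 → ‖f‖ ≤ 1 → ⟪e, f⟫ = 0 → ‖T e‖ ^ 2 + ‖T f‖ ^ 2 ≤ K)
    {p q : F} (hpq : ⟪p, q⟫ = 0) : ‖T p‖ + ‖T q‖ ≤ √(‖p‖ ^ 2 + ‖q‖ ^ 2) * √K := by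
  set e := NormedSpace.normalize p
  set f := NormedSpace.normalize q
  have hef : ⟪e, f⟫ = 0 := by
    simp [e, f, NormedSpace.normalize, inner_smul_left, inner_smul_right, hpq]
  have hK := hT e f (norm_normalize_le_one p) (norm_normalize_le_one q) hef
  have hTp : ‖T p‖ = ‖p‖ * ‖T e‖ := by
    rw [← NormedSpace.norm_smul_normalize p, map_smul, norm_smul, norm_norm,
      NormedSpace.norm_smul_normalize]
  have hTq : ‖T q‖ = ‖q‖ * ‖T f‖ := by
    rw [← NormedSpace.norm_smul_normalize q, map_smul, norm_smul, norm_norm,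
      NormedSpace.norm_smul_normalize]
  rw [hTp, hTq, ← Real.sqrt_mul (by positivity)]
  refine Real.le_sqrt_of_sq_le ?_
  calc (‖p‖ * ‖T e‖ + ‖q‖ * ‖T f‖) ^ 2
      ≤ (‖p‖ ^ 2 + ‖q‖ ^ 2) * (‖T e‖ ^ 2 + ‖T f‖ ^ 2) := by
        linarith [sq_nonneg (‖p‖ * ‖T f‖ - ‖q‖ * ‖T e‖)]
    _ ≤ (‖p‖ ^ 2 + ‖q‖ ^ 2) * K := by gcongr

theorem chsh_inner_le {T : F →ₗ[ℝ] G} {K : ℝ}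
    (hT : ∀ e f, ‖e‖ ≤ 1 → ‖f‖ ≤ 1 → ⟪e, f⟫ = 0 → ‖T e‖ ^ 2 + ‖T f‖ ^ 2 ≤ K)
    {a₀ a₁ : G} (ha₀ : ‖a₀‖ ≤ 1) (ha₁ : ‖a₁‖ ≤ 1) {b₀ b₁ : F} (hb₀ : ‖b₀‖ = 1) (hb₁ : ‖b₁‖ = 1) :
    chsh ((innerₗ G).compl₂ T) a₀ a₁ b₀ b₁ ≤ 2 * √K := by
  have horth : ⟪b₀ + b₁, b₀ - b₁⟫ = 0 := by
    rw [real_inner_add_sub_eq_zero_iff, hb₀, hb₁]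
  have hnorm : ‖b₀ + b₁‖ ^ 2 + ‖b₀ - b₁‖ ^ 2 = 2 ^ 2 := by
    rw [norm_add_sq_real, norm_sub_sq_real, hb₀, hb₁]
    ring
  calc chsh ((innerₗ G).compl₂ T) a₀ a₁ b₀ b₁
      = ⟪a₀, T (b₀ + b₁)⟫ + ⟪a₁, T (b₀ - b₁)⟫ := by
        simp only [chsh, LinearMap.compl₂_apply, innerₗ_apply_apply, map_add, map_sub,
          inner_add_right, inner_sub_right]
        ring
    _ ≤ ‖T (b₀ + b₁)‖ + ‖T (b₀ - b₁)‖ :=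
        add_le_add
          ((real_inner_le_norm _ _).trans (mul_le_of_le_one_left (norm_nonneg _) ha₀))
          ((real_inner_le_norm _ _).trans (mul_le_of_le_one_left (norm_nonneg _) ha₁))
    _ ≤ 2 * √K := by
        simpa only [hnorm, Real.sqrt_sq zero_le_two] using norm_map_add_norm_map_le hT horth

end Horodecki

section Correlations

open scoped MatrixOrder

variable {m n : Type*} [Fintype m] [Fintype n]

/-- The correlations `(X, Y) ↦ Re tr(ρ (X ⊗ Y))` of local observables in the state `ρ`, as a real
bilinear form on all pairs of matrices. -/
noncomputable def correlationForm (ρ : Matrix (m × n) (m × n) ℂ) :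
    Matrix m m ℂ →ₗ[ℝ] Matrix n n ℂ →ₗ[ℝ] ℝ :=
  LinearMap.mk₂ ℝ (fun X Y => (ρ * (X ⊗ₖ Y)).trace.re)
    (fun X X' Y => by simp [add_kronecker, mul_add])
    (fun r X Y => by simp [smul_kronecker])
    (fun X Y Y' => by simp [kronecker_add, mul_add])
    (fun r X Y => by simp [kronecker_smul])

lemma correlationForm_apply (ρ : Matrix (m × n) (m × n) ℂ) (X : Matrix m m ℂ) (Y : Matrix n n ℂ) :
    correlationForm ρ X Y = (ρ * (X ⊗ₖ Y)).trace.re :=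
  rfl

lemma correlationForm_one_one [DecidableEq m] [DecidableEq n] {ρ : Matrix (m × n) (m × n) ℂ}
    (hρ : ρ.trace = 1) : correlationForm ρ 1 1 = 1 := by
  simp [correlationForm_apply, hρ]

lemma trace_mul_nonneg_of_posSemidef {A B : Matrix n n ℂ} (hA : A.PosSemidef)
    (hB : B.PosSemidef) : 0 ≤ (A * B).trace := by
  classical
  obtain ⟨C, rfl⟩ := CStarAlgebra.nonneg_iff_eq_star_mul_self.mp hB.nonneg
  rw [star_eq_conjTranspose, ← mul_assoc, trace_mul_comm, ← mul_assoc]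
  exact (hA.mul_mul_conjTranspose_same C).trace_nonneg

lemma correlationForm_nonneg {ρ : Matrix (m × n) (m × n) ℂ} (hρ : ρ.PosSemidef)
    (X : Matrix m m ℂ) (Y : Matrix n n ℂ) (hX : 0 ≤ X) (hY : 0 ≤ Y) :
    0 ≤ correlationForm ρ X Y :=
  (Complex.le_def.1 (trace_mul_nonneg_of_posSemidef hρ
    ((nonneg_iff_posSemidef.1 hX).kronecker (nonneg_iff_posSemidef.1 hY)))).1

lemma tiltedCHBell_eq_chsh {d : ℕ} (τ : ℝ) (ρ : Matrix (Fin d × Fin d) (Fin d × Fin d) ℂ)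
    (A₀ A₁ B₀ B₁ : Matrix (Fin d) (Fin d) ℂ) :
    tiltedCHBell τ ρ A₀ A₁ B₀ B₁ = chsh (correlationForm ρ) A₀ A₁ B₀ B₁ -
      τ * correlationForm ρ A₀ 1 - τ * correlationForm ρ 1 B₀ := by
  simp only [tiltedCHBell, chsh, correlationForm_apply, mul_add, mul_sub, trace_add, trace_sub,
    Complex.add_re, Complex.sub_re]

lemma chsh_correlationForm_two_smul_sub_one {d : ℕ}
    {ρ : Matrix (Fin d × Fin d) (Fin d × Fin d) ℂ} (hρ : ρ.trace = 1)
    (A₀ A₁ B₀ B₁ : Matrix (Fin d) (Fin d) ℂ) :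
    chsh (correlationForm ρ) ((2 : ℝ) • A₀ - 1) ((2 : ℝ) • A₁ - 1)
      ((2 : ℝ) • B₀ - 1) ((2 : ℝ) • B₁ - 1) = 4 * tiltedCHBell 1 ρ A₀ A₁ B₀ B₁ + 2 := by
  rw [chsh_two_smul_sub, correlationForm_one_one hρ, tiltedCHBell_eq_chsh]
  ring

lemma IsPOVMElem.two_smul_sub_one_mem_Icc {d : ℕ} {A : Matrix (Fin d) (Fin d) ℂ}
    (hA : IsPOVMElem A) : (2 : ℝ) • A - 1 ∈ Set.Icc (-1) 1 := by
  constructor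
  · rw [le_iff, sub_neg_eq_add, sub_add_cancel]
    exact hA.1.smul zero_le_two
  · rw [le_iff, show 1 - ((2 : ℝ) • A - 1) = (2 : ℝ) • (1 - A) by module]
    exact hA.2.smul zero_le_two

end Correlations

section HermitianInvolutions

open scoped MatrixOrder

variable {n : Type*} [DecidableEq n]

lemma isHermitian_of_le_one {X : Matrix n n ℂ} (hX : X ≤ 1) : X.IsHermitian := by
  simpa using isHermitian_one.sub (le_iff.1 hX).isHermitian

variable [Fintype n]

variable (n) in
/-- The Hermitian involutions: the observables of projective measurements with outcomes `±1`. -/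
def hermitianInvolutions : Set (Matrix n n ℂ) :=
  {X | X.IsHermitian ∧ X * X = 1}

lemma neg_mem_hermitianInvolutions {X : Matrix n n ℂ} (hX : X ∈ hermitianInvolutions n) :
    -X ∈ hermitianInvolutions n :=
  ⟨hX.1.neg, by rw [neg_mul_neg, hX.2]⟩

lemma le_one_of_mem_hermitianInvolutions {X : Matrix n n ℂ} (hX : X ∈ hermitianInvolutions n) :
    X ≤ 1 := by
  have hsq : 1 - X = (2⁻¹ : ℝ) • ((1 - X)ᴴ * (1 - X)) := by
    rw [conjTranspose_sub, conjTranspose_one, hX.1.eq, mul_sub, sub_mul, sub_mul, hX.2]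
    simp only [one_mul, mul_one]
    module
  rw [le_iff, hsq]
  exact (posSemidef_conjTranspose_mul_self _).smul (by norm_num)

lemma hermitianInvolutions_subset_Icc : hermitianInvolutions n ⊆ Set.Icc (-1) 1 := fun _ hX =>
  ⟨neg_le.1 (le_one_of_mem_hermitianInvolutions (neg_mem_hermitianInvolutions hX)),
    le_one_of_mem_hermitianInvolutions hX⟩

lemma eigenvalues_mem_Icc {X : Matrix n n ℂ} (hX : X.IsHermitian) (hX₁ : X ∈ Set.Icc (-1) 1)
    (i : n) : hX.eigenvalues i ∈ Set.Icc (-1) 1 := by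
  have hself : IsSelfAdjoint X := hX
  have hspec := hX.eigenvalues_mem_spectrum_real i
  exact ⟨(algebraMap_le_iff_le_spectrum hself).1 (by simpa using hX₁.1) _ hspec,
    (le_algebraMap_iff_spectrum_le hself).1 (by simpa using hX₁.2) _ hspec⟩

/-- The algebra homomorphism `c ↦ U diag(c) U*` from real vectors to matrices, for `U` unitary. -/
noncomputable def conjDiagonal (U : unitaryGroup n ℂ) : (n → ℝ) →ₐ[ℝ] Matrix n n ℂ :=
  (((Unitary.conjStarAlgAut ℂ (Matrix n n ℂ) U).toAlgEquiv.toAlgHom).restrictScalars ℝ).comp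
    ((diagonalAlgHom ℝ).comp (Complex.ofRealAm.compLeft n))

lemma conjDiagonal_apply (U : unitaryGroup n ℂ) (c : n → ℝ) : conjDiagonal U c =
    Unitary.conjStarAlgAut ℂ (Matrix n n ℂ) U (diagonal (RCLike.ofReal ∘ c)) :=
  rfl

lemma isHermitian_conjDiagonal (U : unitaryGroup n ℂ) (c : n → ℝ) :
    (conjDiagonal U c).IsHermitian := by
  have hdiag : IsSelfAdjoint (diagonal (RCLike.ofReal ∘ c) : Matrix n n ℂ) := by
    refine isHermitian_diagonal_of_self_adjoint _ ?_
    ext i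
    simp
  exact hdiag.map (Unitary.conjStarAlgAut ℂ (Matrix n n ℂ) U)

theorem Icc_subset_convexHull_hermitianInvolutions :
    Set.Icc (-1) 1 ⊆ convexHull ℝ (hermitianInvolutions n) := by
  intro X hX
  have hH := isHermitian_of_le_one hX.2
  set φ := conjDiagonal hH.eigenvectorUnitary
  have hcube : hH.eigenvalues ∈ convexHull ℝ (Set.univ.pi fun _ : n => ({-1, 1} : Set ℝ)) := by
    rw [convexHull_pi, convexHull_pair, segment_eq_Icc (by norm_num)]
    exact fun i _ => eigenvalues_mem_Icc hH hX i
  have hvertex : φ '' Set.univ.pi (fun _ : n => ({-1, 1} : Set ℝ)) ⊆ hermitianInvolutions n := by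
    rintro _ ⟨ε, hε, rfl⟩
    have hε₁ : ε * ε = 1 := funext fun i => mul_self_eq_one_iff.2 (hε i trivial).symm
    exact ⟨isHermitian_conjDiagonal _ ε, by rw [← map_mul, hε₁, map_one]⟩
  have himage : φ hH.eigenvalues ∈ convexHull ℝ (hermitianInvolutions n) :=
    convexHull_mono hvertex
      (φ.toLinearMap.image_convexHull _ ▸ Set.mem_image_of_mem φ.toLinearMap hcube)
  rwa [conjDiagonal_apply, ← hH.spectral_theorem] at himage

end HermitianInvolutions

section Qubits

open scoped MatrixOrder

lemma eq_one_or_eq_neg_one_of_mul_self_eq_one {K : Type*} [Field K] {X : Matrix (Fin 2) (Fin 2) K}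
    (hX : X * X = 1) (htr : X.trace ≠ 0) : X = 1 ∨ X = -1 := by
  have hCH : X.trace • X = (1 + X.det) • (1 : Matrix (Fin 2) (Fin 2) K) := by
    have := X.aeval_self_charpoly
    simp only [charpoly_fin_two, map_add, map_sub, map_mul, Polynomial.aeval_X,
      Polynomial.aeval_C, pow_two, hX, Algebra.algebraMap_eq_smul_one, smul_one_mul] at this
    linear_combination (norm := module) -this
  obtain ⟨c, rfl⟩ : ∃ c : K, c • (1 : Matrix (Fin 2) (Fin 2) K) = X :=
    ⟨X.trace⁻¹ * (1 + X.det), by rw [mul_smul, ← hCH, inv_smul_smul₀ htr]⟩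
  have hc : c * c = 1 := by simpa using congr_fun₂ hX 0 0
  exact (mul_self_eq_one_iff.1 hc).imp (by rintro rfl; exact one_smul _ _)
    (by rintro rfl; rw [neg_smul, one_smul])

/-- The Pauli vector `v · σ = v₀ σ_x + v₁ σ_y + v₂ σ_z`. -/
noncomputable def pauliVec (v : EuclideanSpace ℝ (Fin 3)) : Matrix (Fin 2) (Fin 2) ℂ :=
  !![(v 2 : ℂ), v 0 - v 1 * Complex.I; v 0 + v 1 * Complex.I, -v 2]

lemma pauliVec_mul_self (v : EuclideanSpace ℝ (Fin 3)) :
    pauliVec v * pauliVec v = ((‖v‖ ^ 2 : ℝ) : ℂ) • (1 : Matrix (Fin 2) (Fin 2) ℂ) := by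
  rw [EuclideanSpace.real_norm_sq_eq, Fin.sum_univ_three, pauliVec, mul_fin_two, one_fin_two,
    smul_of, smul_cons, smul_cons]
  push_cast
  simp only [smul_cons, smul_eq_mul, smul_empty]
  congrm !![?_, ?_; ?_, ?_]
  all_goals ring_nf
  all_goals rw [Complex.I_sq]
  all_goals ring_nf

lemma exists_pauliVec_eq {X : Matrix (Fin 2) (Fin 2) ℂ} (hX : X.IsHermitian)
    (htr : X.trace = 0) : ∃ v, pauliVec v = X := by
  have h₀₀ : ((X 0 0).re : ℂ) = X 0 0 := hX.coe_re_apply_self 0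
  have h₁₀ : X 1 0 = (X 0 1).re - (X 0 1).im * Complex.I := by
    rw [← hX.apply 1 0]
    exact Complex.ext (by simp) (by simp)
  have h₁₁ : X 1 1 = -X 0 0 := eq_neg_of_add_eq_zero_right (X.trace_fin_two ▸ htr)
  refine ⟨!₂[(X 0 1).re, -(X 0 1).im, (X 0 0).re], Eq.trans ?_ (eta_fin_two X).symm⟩
  simp [pauliVec, h₀₀, h₁₀, h₁₁, ← sub_eq_add_neg]

lemma eq_one_or_eq_neg_one_or_exists_pauliVec {X : Matrix (Fin 2) (Fin 2) ℂ}
    (hX : X ∈ hermitianInvolutions (Fin 2)) :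
    (X = 1 ∨ X = -1) ∨ ∃ v, ‖v‖ = 1 ∧ pauliVec v = X := by
  by_cases htr : X.trace = 0
  · obtain ⟨v, rfl⟩ := exists_pauliVec_eq hX.1 htr
    have hv : ‖v‖ ^ 2 = 1 := by
      simpa [pauliVec_mul_self, ← Complex.ofReal_pow] using congr_fun₂ hX.2 0 0
    exact .inr ⟨v, (pow_eq_one_iff_of_nonneg (norm_nonneg v) two_ne_zero).1 hv, rfl⟩
  · exact .inl (eq_one_or_eq_neg_one_of_mul_self_eq_one hX.2 htr)

/-- The linear map `diag(c, -c, 1)` on Bloch vectors: the correlation matrix of `ψ^γ` when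
`c = sin 2γ`. -/
noncomputable def blochCorrelation (c : ℝ) :
    EuclideanSpace ℝ (Fin 3) →ₗ[ℝ] EuclideanSpace ℝ (Fin 3) :=
  toEuclideanLin (diagonal ![c, -c, 1])

lemma blochCorrelation_apply (c : ℝ) (v : EuclideanSpace ℝ (Fin 3)) :
    blochCorrelation c v = !₂[c * v 0, -c * v 1, v 2] := by
  ext i
  fin_cases i <;> simp [blochCorrelation, toLpLin_apply, mulVec_diagonal]

open scoped RealInnerProductSpace

lemma norm_sq_blochCorrelation (c : ℝ) (v : EuclideanSpace ℝ (Fin 3)) :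
    ‖blochCorrelation c v‖ ^ 2 = c ^ 2 * ‖v‖ ^ 2 + (1 - c ^ 2) * v 2 ^ 2 := by
  simp only [EuclideanSpace.real_norm_sq_eq, Fin.sum_univ_three, blochCorrelation_apply, cons_val]
  ring

lemma norm_sq_blochCorrelation_add_le {c : ℝ} (hc : c ^ 2 ≤ 1) {e f : EuclideanSpace ℝ (Fin 3)}
    (he : ‖e‖ ≤ 1) (hf : ‖f‖ ≤ 1) (hef : ⟪e, f⟫ = 0) :
    ‖blochCorrelation c e‖ ^ 2 + ‖blochCorrelation c f‖ ^ 2 ≤ 1 + c ^ 2 := by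
  have hbessel : e 2 ^ 2 + f 2 ^ 2 ≤ 1 := by
    simpa [EuclideanSpace.inner_single_right] using
      inner_sq_add_inner_sq_le_norm_sq he hf hef (EuclideanSpace.single 2 1)
  have he' : ‖e‖ ^ 2 ≤ 1 := pow_le_one₀ (norm_nonneg e) he
  have hf' : ‖f‖ ^ 2 ≤ 1 := pow_le_one₀ (norm_nonneg f) hf
  calc ‖blochCorrelation c e‖ ^ 2 + ‖blochCorrelation c f‖ ^ 2
      = c ^ 2 * (‖e‖ ^ 2 + ‖f‖ ^ 2) + (1 - c ^ 2) * (e 2 ^ 2 + f 2 ^ 2) := by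
        rw [norm_sq_blochCorrelation, norm_sq_blochCorrelation]
        ring
    _ ≤ c ^ 2 * (1 + 1) + (1 - c ^ 2) * 1 := by
        have := sub_nonneg.2 hc
        gcongr
    _ = 1 + c ^ 2 := by ring

lemma isDensityMatrix_schmidtState (γ : ℝ) : IsDensityMatrix (schmidtState γ) := by
  refine ⟨posSemidef_vecMulVec_self_star _, ?_⟩
  have hnorm : (Real.cos γ * Real.cos γ + Real.sin γ * Real.sin γ : ℂ) = 1 := by
    rw [← sq, ← sq]
    exact_mod_cast Real.cos_sq_add_sin_sq γ
  simpa [schmidtState, schmidtVec, trace_vecMulVec, dotProduct, Fintype.sum_prod_type,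
    Complex.conj_ofReal, -Complex.ofReal_cos, -Complex.ofReal_sin] using hnorm

lemma correlationForm_schmidtState_apply (γ : ℝ) (X Y : Matrix (Fin 2) (Fin 2) ℂ) :
    correlationForm (schmidtState γ) X Y =
      Real.cos γ ^ 2 * (X 0 0 * Y 0 0).re + Real.sin γ ^ 2 * (X 1 1 * Y 1 1).re +
        Real.cos γ * Real.sin γ * (X 0 1 * Y 0 1 + X 1 0 * Y 1 0).re := by
  simp only [schmidtState, schmidtVec, correlationForm_apply, trace, diag_apply, mul_apply,
    vecMulVec_apply, ite_mul, zero_mul, kroneckerMap_apply, Finset.sum_ite_irrel,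
    Fintype.sum_prod_type, Prod.mk.injEq, Fin.sum_univ_two, and_true, zero_ne_one, and_false,
    ↓reduceIte, one_ne_zero, Complex.conj_ofReal, map_zero, mul_zero, add_zero, zero_add,
    Finset.sum_const_zero, Complex.add_re, Complex.mul_re, Complex.ofReal_re, Complex.ofReal_im,
    sub_zero, Complex.mul_im]
  ring

lemma correlationForm_schmidtState_pauliVec (γ : ℝ) (v w : EuclideanSpace ℝ (Fin 3)) :
    correlationForm (schmidtState γ) (pauliVec v) (pauliVec w) =
      ⟪v, blochCorrelation (Real.sin (2 * γ)) w⟫ := by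
  rw [correlationForm_schmidtState_apply]
  simp only [pauliVec, of_apply, cons_val', cons_val_zero, cons_val_one, cons_val_fin_one,
    Complex.mul_re, Complex.mul_im, Complex.add_re, Complex.add_im, Complex.sub_re, Complex.sub_im,
    Complex.neg_re, Complex.neg_im, Complex.ofReal_re, Complex.ofReal_im, Complex.I_re,
    Complex.I_im, Real.sin_two_mul, blochCorrelation_apply, PiLp.inner_apply, RCLike.inner_apply,
    Real.ringHom_apply, Fin.sum_univ_three, cons_val]
  linear_combination (v 2 * w 2) * Real.cos_sq_add_sin_sq γ

lemma chsh_schmidtState_pauliVec_le (γ : ℝ) {a₀ a₁ b₀ b₁ : EuclideanSpace ℝ (Fin 3)}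
    (ha₀ : ‖a₀‖ ≤ 1) (ha₁ : ‖a₁‖ ≤ 1) (hb₀ : ‖b₀‖ = 1) (hb₁ : ‖b₁‖ = 1) :
    chsh (correlationForm (schmidtState γ)) (pauliVec a₀) (pauliVec a₁) (pauliVec b₀)
      (pauliVec b₁) ≤ 2 * √(1 + Real.sin (2 * γ) ^ 2) := by
  simpa only [chsh, correlationForm_schmidtState_pauliVec, LinearMap.compl₂_apply,
    innerₗ_apply_apply] using
    chsh_inner_le (fun _ _ he hf => norm_sq_blochCorrelation_add_le (Real.sin_sq_le_one _) he hf)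
      ha₀ ha₁ hb₀ hb₁

lemma chsh_schmidtState_le_of_mem_hermitianInvolutions (γ : ℝ)
    {X₀ X₁ Y₀ Y₁ : Matrix (Fin 2) (Fin 2) ℂ}
    (hX₀ : X₀ ∈ hermitianInvolutions (Fin 2)) (hX₁ : X₁ ∈ hermitianInvolutions (Fin 2))
    (hY₀ : Y₀ ∈ hermitianInvolutions (Fin 2)) (hY₁ : Y₁ ∈ hermitianInvolutions (Fin 2)) :
    chsh (correlationForm (schmidtState γ)) X₀ X₁ Y₀ Y₁ ≤ 2 * √(1 + Real.sin (2 * γ) ^ 2) := by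
  have hρ := isDensityMatrix_schmidtState γ
  have hpos := correlationForm_nonneg hρ.1
  have hclassical : 2 * correlationForm (schmidtState γ) 1 1 ≤ 2 * √(1 + Real.sin (2 * γ) ^ 2) := by
    rw [correlationForm_one_one hρ.2]
    gcongr
    exact Real.one_le_sqrt.2 (le_add_of_nonneg_right (sq_nonneg _))
  have hIcc := hermitianInvolutions_subset_Icc (n := Fin 2)
  by_cases hX : (X₀ = 1 ∨ X₀ = -1) ∨ (X₁ = 1 ∨ X₁ = -1)
  · exact (chsh_le_of_left_deterministic hpos (hIcc hX₀) (hIcc hX₁) (hIcc hY₀) (hIcc hY₁) hX).trans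
      hclassical
  by_cases hY : (Y₀ = 1 ∨ Y₀ = -1) ∨ (Y₁ = 1 ∨ Y₁ = -1)
  · exact (chsh_le_of_right_deterministic hpos (hIcc hX₀) (hIcc hX₁) (hIcc hY₀) (hIcc hY₁) hY).trans
      hclassical
  rw [not_or] at hX hY
  obtain ⟨a₀, ha₀, rfl⟩ := (eq_one_or_eq_neg_one_or_exists_pauliVec hX₀).resolve_left hX.1
  obtain ⟨a₁, ha₁, rfl⟩ := (eq_one_or_eq_neg_one_or_exists_pauliVec hX₁).resolve_left hX.2
  obtain ⟨b₀, hb₀, rfl⟩ := (eq_one_or_eq_neg_one_or_exists_pauliVec hY₀).resolve_left hY.1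
  obtain ⟨b₁, hb₁, rfl⟩ := (eq_one_or_eq_neg_one_or_exists_pauliVec hY₁).resolve_left hY.2
  exact chsh_schmidtState_pauliVec_le γ ha₀.le ha₁.le hb₀ hb₁

theorem chsh_schmidtState_le (γ : ℝ) {X₀ X₁ Y₀ Y₁ : Matrix (Fin 2) (Fin 2) ℂ}
    (hX₀ : X₀ ∈ Set.Icc (-1) 1) (hX₁ : X₁ ∈ Set.Icc (-1) 1)
    (hY₀ : Y₀ ∈ Set.Icc (-1) 1) (hY₁ : Y₁ ∈ Set.Icc (-1) 1) :
    chsh (correlationForm (schmidtState γ)) X₀ X₁ Y₀ Y₁ ≤ 2 * √(1 + Real.sin (2 * γ) ^ 2) :=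
  chsh_le_of_mem_convexHull
    (fun _ hX₀ _ hX₁ _ hY₀ _ hY₁ =>
      chsh_schmidtState_le_of_mem_hermitianInvolutions γ hX₀ hX₁ hY₀ hY₁)
    (Icc_subset_convexHull_hermitianInvolutions hX₀)
    (Icc_subset_convexHull_hermitianInvolutions hX₁)
    (Icc_subset_convexHull_hermitianInvolutions hY₀)
    (Icc_subset_convexHull_hermitianInvolutions hY₁)

theorem abs_chsh_schmidtState_le (γ : ℝ) {X₀ X₁ Y₀ Y₁ : Matrix (Fin 2) (Fin 2) ℂ}
    (hX₀ : X₀ ∈ Set.Icc (-1) 1) (hX₁ : X₁ ∈ Set.Icc (-1) 1)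
    (hY₀ : Y₀ ∈ Set.Icc (-1) 1) (hY₁ : Y₁ ∈ Set.Icc (-1) 1) :
    |chsh (correlationForm (schmidtState γ)) X₀ X₁ Y₀ Y₁| ≤ 2 * √(1 + Real.sin (2 * γ) ^ 2) := by
  refine abs_le'.2 ⟨chsh_schmidtState_le γ hX₀ hX₁ hY₀ hY₁, ?_⟩
  rw [← chsh_neg_left]
  exact chsh_schmidtState_le γ (neg_mem_Icc_neg hX₀) (neg_mem_Icc_neg hX₁) hY₀ hY₁

end Qubits

theorem concurrence_lower_bound_of_CH_general (γ : ℝ) {A₀ A₁ B₀ B₁ : Matrix (Fin 2) (Fin 2) ℂ}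
    (hA₀ : IsPOVMElem A₀) (hA₁ : IsPOVMElem A₁) (hB₀ : IsPOVMElem B₀) (hB₁ : IsPOVMElem B₁) :
    (2 * tiltedCHBell 1 (schmidtState γ) A₀ A₁ B₀ B₁ + 1) ^ 2 - 1 ≤ Real.sin (2 * γ) ^ 2 := by
  have hchsh := abs_chsh_schmidtState_le γ hA₀.two_smul_sub_one_mem_Icc
    hA₁.two_smul_sub_one_mem_Icc hB₀.two_smul_sub_one_mem_Icc hB₁.two_smul_sub_one_mem_Icc
  rw [chsh_correlationForm_two_smul_sub_one (isDensityMatrix_schmidtState γ).2] at hchsh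
  have habs : |2 * tiltedCHBell 1 (schmidtState γ) A₀ A₁ B₀ B₁ + 1| ≤
      √(1 + Real.sin (2 * γ) ^ 2) := by
    rw [abs_le] at hchsh ⊢
    constructor <;> linarith
  rw [sub_le_iff_le_add', ← Real.sqrt_le_sqrt_iff (by positivity), Real.sqrt_sq_eq_abs]
  exact habs

/-- a nonnegative observed Clauser–Horne value `S = S^(1)(ρ_γ; …)`
yields the lower bound `sin(2γ) ≥ √((2S + 1)² − 1)` on the concurrence of `|ψ^γ⟩`. -/
theorem concurrence_lower_bound_of_CH
    (γ : ℝ) (hγ₀ : 0 ≤ γ) (hγ₁ : γ ≤ Real.pi / 4)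
    (A0 A1 B0 B1 : Matrix (Fin 2) (Fin 2) ℂ)
    (hA0 : IsPOVMElem A0) (hA1 : IsPOVMElem A1)
    (hB0 : IsPOVMElem B0) (hB1 : IsPOVMElem B1)
    (hS : 0 ≤ tiltedCHBell 1 (schmidtState γ) A0 A1 B0 B1) :
    Real.sin (2 * γ) ≥
      Real.sqrt ((2 * tiltedCHBell 1 (schmidtState γ) A0 A1 B0 B1 + 1) ^ 2 - 1) := by
  have hsin : 0 ≤ Real.sin (2 * γ) :=
    Real.sin_nonneg_of_nonneg_of_le_pi (by linarith) (by linarith [Real.pi_pos])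
  exact Real.sqrt_le_iff.2 ⟨hsin, concurrence_lower_bound_of_CH_general γ hA0 hA1 hB0 hB1⟩
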